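/- The expected number of draws to collect at least two copies of each of d coupon kinds equals d² Σ_{m=0}^{d-1} Σ_{j=0}^{m} (-1)^m C(d-1,m) C(m,j) (j+2)!/(m+1)^{j+3}. -/

import Mathlib

/-- The probability that a collector of `d` coupon kinds, who stops on first having at
least two copies of every kind, stops at exactly trial `n`. -/
noncomputable def stopProb (d n : ℕ) : ℝ :=
  ((Nat.card {f : Fin n → Fin d //
      (∀ c : Fin d, 2 ≤ (Finset.univ.filter fun i : Fin n => f i = c).card) ∧
      ¬ (∀ c : Fin d,
          2 ≤ (Finset.univ.filter fun i : Fin n => (i : ℕ) < n - 1 ∧ f i = c).card)} : ℕ) : ℝ)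
    / (d : ℝ) ^ n

theorem Derivation.map_prod {R A ι : Type*} [CommSemiring R] [CommSemiring A] [Algebra R A]
    [DecidableEq ι] (D : Derivation R A A) (s : Finset ι) (f : ι → A) :
    D (∏ i ∈ s, f i) = ∑ a ∈ s, ∏ i ∈ s, Function.update f a (D (f a)) i := by
  induction s using Finset.induction_on with
  | empty => simp
  | insert b s hb ih =>
    rw [Finset.prod_insert hb, D.leibniz, ih, Finset.sum_insert hb, Finset.prod_insert hb,
      Function.update_self, Finset.prod_update_of_notMem hb, smul_eq_mul, smul_eq_mul, add_comm,
      mul_comm, Finset.mul_sum]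
    congr 1
    refine Finset.sum_congr rfl fun a ha => ?_
    rw [Finset.prod_insert hb, Function.update_of_ne (by rintro rfl; exact hb ha)]

theorem sum_eq_sum_snoc {ι M : Type*} [Fintype ι] [AddCommMonoid M] {n : ℕ}
    (F : (Fin (n + 1) → ι) → M) :
    ∑ f, F f = ∑ a : ι, ∑ g : Fin n → ι, F (Fin.snoc (α := fun _ => ι) g a) := by
  rw [← (Fin.snocEquiv fun _ => ι).sum_comp, Fintype.sum_prod_type]
  rfl

theorem card_filter_snoc_eq {ι : Type*} [DecidableEq ι] {n : ℕ} (g : Fin n → ι) (a c : ι) :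
    (Finset.univ.filter fun i => Fin.snoc (α := fun _ => ι) g a i = c).card
      = (Finset.univ.filter fun i => g i = c).card + if a = c then 1 else 0 := by
  simp only [Finset.card_filter, Fin.sum_univ_castSucc, Fin.snoc_castSucc, Fin.snoc_last]

theorem card_filter_lt_snoc_eq {ι : Type*} [DecidableEq ι] {n : ℕ} (g : Fin n → ι) (a c : ι) :
    (Finset.univ.filter fun i : Fin (n + 1) =>
        (i : ℕ) < n ∧ Fin.snoc (α := fun _ => ι) g a i = c).card
      = (Finset.univ.filter fun i => g i = c).card := by
  simp only [Finset.card_filter, Fin.sum_univ_castSucc, Fin.snoc_castSucc, Fin.val_castSucc,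
    Fin.is_lt, true_and, Fin.val_last, lt_irrefl, false_and, if_false, add_zero]

open PowerSeries in
theorem sum_prod_card_filter_eq {ι : Type*} [Fintype ι] [DecidableEq ι] (n : ℕ)
    (w : ι → ℕ → ℝ) :
    ∑ f : Fin n → ι, ∏ c, w c (Finset.univ.filter fun i => f i = c).card
      = (n.factorial : ℝ) *
        coeff n (∏ c, PowerSeries.mk fun k => w c k / (k.factorial : ℝ)) := by
  induction n generalizing w with
  | zero => simp [coeff_zero_eq_constantCoeff, ← coeff_zero_eq_constantCoeff_apply, map_prod]
  | succ n ih =>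
    have hshift (a : ι) (g : Fin n → ι) :
        ∏ c, w c ((Finset.univ.filter fun i => g i = c).card + if a = c then 1 else 0)
          = ∏ c, Function.update w a (fun k => w a (k + 1)) c
              (Finset.univ.filter fun i => g i = c).card := by
      refine Finset.prod_congr rfl fun c _ => ?_
      rcases eq_or_ne a c with rfl | h
      · simp
      · simp [h, Function.update_of_ne h.symm]
    have hderiv (a : ι) :
        (∏ c, PowerSeries.mk fun k =>
            Function.update w a (fun k => w a (k + 1)) c k / (k.factorial : ℝ))
          = ∏ c, Function.update (fun c => PowerSeries.mk fun k => w c k / (k.factorial : ℝ)) a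
              (d⁄dX ℝ (PowerSeries.mk fun k => w a k / (k.factorial : ℝ))) c := by
      refine Finset.prod_congr rfl fun c _ => ?_
      rcases eq_or_ne c a with rfl | h
      · ext k
        simp only [Function.update_self, coeff_mk, coeff_derivative, Nat.factorial_succ]
        push_cast
        field_simp
      · simp [Function.update_of_ne h]
    rw [sum_eq_sum_snoc]
    simp only [card_filter_snoc_eq, hshift, ih, hderiv]
    rw [← Finset.mul_sum, ← map_sum, ← Derivation.map_prod, coeff_derivative,
      Nat.factorial_succ]
    push_cast
    ring

open PowerSeries in
theorem factorial_mul_coeff_exp_pow_mul_X_pow (n k j : ℕ) :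
    (n.factorial : ℝ) * coeff n (X ^ j * exp ℝ ^ k)
      = (n.descFactorial j : ℝ) * (k : ℝ) ^ (n - j) := by
  rw [coeff_X_pow_mul', exp_pow_eq_rescale_exp]
  split_ifs with h
  · have := Nat.factorial_mul_descFactorial h
    have hne : ((n - j).factorial : ℝ) ≠ 0 := by positivity
    rw [← this]
    simp [coeff_rescale, coeff_exp]
    field_simp
  · simp [Nat.descFactorial_of_lt (not_le.mp h)]

open PowerSeries in
theorem X_mul_exp_sub_pow (d : ℕ) :
    (X : ℝ⟦X⟧) * (exp ℝ - 1 - X) ^ d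
      = ∑ m ∈ Finset.range (d + 1), ∑ j ∈ Finset.range (m + 1),
          C ((-1 : ℝ) ^ m * (d.choose m : ℝ) * (m.choose j : ℝ)) *
            (X ^ (j + 1) * exp ℝ ^ (d - m)) := by
  have h : exp ℝ - 1 - X = -(X + 1) + exp ℝ := by ring
  rw [h, add_pow, Finset.mul_sum]
  refine Finset.sum_congr rfl fun m _ => ?_
  rw [neg_pow, add_pow, Finset.mul_sum, Finset.sum_mul, Finset.sum_mul, Finset.mul_sum]
  refine Finset.sum_congr rfl fun j _ => ?_
  simp only [map_mul, map_pow, map_neg, map_one, map_natCast, one_pow]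
  ring

theorem stopProb_zero {d : ℕ} (hd : 1 ≤ d) : stopProb d 0 = 0 := by
  have : IsEmpty {f : Fin 0 → Fin d //
      (∀ c : Fin d, 2 ≤ (Finset.univ.filter fun i : Fin 0 => f i = c).card) ∧
      ¬ (∀ c : Fin d,
          2 ≤ (Finset.univ.filter fun i : Fin 0 => (i : ℕ) < 0 - 1 ∧ f i = c).card)} :=
    ⟨fun f => by simpa using f.2.1 ⟨0, hd⟩⟩
  rw [stopProb, Nat.card_of_isEmpty, Nat.cast_zero, zero_div]

theorem two_le_add_and_not_iff {ι : Type*} [DecidableEq ι] (k : ι → ℕ) (a : ι) :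
    ((∀ c, 2 ≤ k c + if a = c then 1 else 0) ∧ ¬ ∀ c, 2 ≤ k c)
      ↔ ∀ c, if c = a then k c = 1 else 2 ≤ k c := by
  constructor
  · rintro ⟨h, h'⟩ c
    push Not at h'
    obtain ⟨b, hb⟩ := h'
    have hab : a = b := by
      by_contra hne
      have := h b
      simp only [hne, if_false] at this
      omega
    subst hab
    have := h c
    split_ifs with hc
    · subst hc
      simp only [if_true] at this
      omega
    · simpa [Ne.symm hc] using this
  · intro h
    refine ⟨fun c => ?_, fun h' => ?_⟩
    · have := h c
      rcases eq_or_ne c a with rfl | hc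
      · simp_all
      · simpa [hc, hc.symm] using this
    · have := h a
      have := h' a
      simp_all

open PowerSeries in
theorem stopProb_succ (d n : ℕ) :
    stopProb (d + 1) (n + 1)
      = (n.factorial : ℝ) * coeff n ((X : ℝ⟦X⟧) * (exp ℝ - 1 - X) ^ d) / ((d : ℝ) + 1) ^ n := by
  have hX : (PowerSeries.mk fun k => (if k = 1 then 1 else 0) / (k.factorial : ℝ)) = X := by
    ext k
    rw [coeff_mk, coeff_X]
    split_ifs with h <;> simp [h]
  have hE : (PowerSeries.mk fun k => (if 2 ≤ k then 1 else 0) / (k.factorial : ℝ))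
      = exp ℝ - 1 - X := by
    ext k
    rcases k with _ | _ | k <;> simp [coeff_exp, coeff_X, coeff_one]
  have hcount (a : Fin (d + 1)) :
      ∑ g : Fin n → Fin (d + 1), (if ∀ c, if c = a
            then (Finset.univ.filter fun i => g i = c).card = 1
            else 2 ≤ (Finset.univ.filter fun i => g i = c).card then (1 : ℝ) else 0)
        = (n.factorial : ℝ) * coeff n ((X : ℝ⟦X⟧) * (exp ℝ - 1 - X) ^ d) := by
    have key := sum_prod_card_filter_eq n fun (c : Fin (d + 1)) k =>
      if (if c = a then k = 1 else 2 ≤ k) then (1 : ℝ) else 0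
    have hprod : (∏ c : Fin (d + 1), PowerSeries.mk fun k =>
        (if (if c = a then k = 1 else 2 ≤ k) then (1 : ℝ) else 0) / (k.factorial : ℝ))
          = X * (exp ℝ - 1 - X) ^ d := by
      rw [← Finset.mul_prod_erase _ _ (Finset.mem_univ a)]
      congr 1
      · simpa using hX
      · rw [Finset.prod_congr rfl (g := fun _ => exp ℝ - 1 - X)]
        · simp
        · intro c hc
          simpa [Finset.ne_of_mem_erase hc] using hE
    rw [hprod] at key
    rw [← key]
    refine Finset.sum_congr rfl fun g _ => ?_
    rw [Finset.prod_ite_zero]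
    simp
  have hcard : ((Nat.card {f : Fin (n + 1) → Fin (d + 1) //
      (∀ c, 2 ≤ (Finset.univ.filter fun i => f i = c).card) ∧
      ¬ (∀ c, 2 ≤ (Finset.univ.filter fun i : Fin (n + 1) =>
          (i : ℕ) < n + 1 - 1 ∧ f i = c).card)} : ℕ) : ℝ)
        = ((d : ℝ) + 1) * ((n.factorial : ℝ) *
            coeff n ((X : ℝ⟦X⟧) * (exp ℝ - 1 - X) ^ d)) := by
    rw [Nat.card_eq_fintype_card, Fintype.card_subtype, Finset.card_filter, Nat.cast_sum,
      sum_eq_sum_snoc]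
    simp only [Nat.add_sub_cancel, card_filter_snoc_eq,
      card_filter_lt_snoc_eq, two_le_add_and_not_iff, Nat.cast_ite, Nat.cast_one, Nat.cast_zero,
      hcount]
    simp
  rw [stopProb, hcard, pow_succ]
  push_cast
  field_simp

theorem hasSum_succ_mul_descFactorial_mul_pow_div (d m j : ℕ) (hm : m ≤ d) :
    HasSum (fun n : ℕ => ((n : ℝ) + 1) *
        ((n.descFactorial (j + 1) : ℝ) * ((d - m : ℕ) : ℝ) ^ (n - (j + 1))) / ((d : ℝ) + 1) ^ n)
      (((d : ℝ) + 1) ^ 2 * ((j + 2).factorial : ℝ) / ((m : ℝ) + 1) ^ (j + 3)) := by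
  have hd : (0 : ℝ) < (d : ℝ) + 1 := by positivity
  set r : ℝ := ((d - m : ℕ) : ℝ) / ((d : ℝ) + 1) with hr
  have hr1 : ‖r‖ < 1 := by
    rw [Real.norm_of_nonneg (by positivity), hr, div_lt_one hd]
    exact_mod_cast Nat.lt_succ_of_le (Nat.sub_le d m)
  have h1r : 1 - r = ((m : ℝ) + 1) / ((d : ℝ) + 1) := by
    rw [hr, Nat.cast_sub hm]
    field_simp
    ring
  have hgeom := (hasSum_choose_mul_geometric_of_norm_lt_one (j + 2) hr1).mul_left
    (((j + 2).factorial : ℝ) / ((d : ℝ) + 1) ^ (j + 1))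
  rw [← hasSum_nat_add_iff' (j + 1), Finset.sum_eq_zero, sub_zero]
  · convert! hgeom using 1
    · ext k
      have hdesc : (k + j + 2) * (k + (j + 1)).descFactorial (j + 1)
          = (j + 2).factorial * (k + (j + 2)).choose (j + 2) := by
        rw [← Nat.descFactorial_eq_factorial_mul_choose]
        exact (Nat.succ_descFactorial_succ (k + (j + 1)) (j + 1)).symm
      have hdesc' : ((k : ℝ) + j + 2) * ((k + (j + 1)).descFactorial (j + 1) : ℝ)
          = ((j + 2).factorial : ℝ) * ((k + (j + 2)).choose (j + 2) : ℝ) := by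
        exact_mod_cast hdesc
      rw [Nat.add_sub_cancel, hr, div_pow, pow_add _ k (j + 1)]
      push_cast
      rw [show (k : ℝ) + (j + 1) + 1 = k + j + 2 by ring, ← mul_assoc, hdesc']
      field_simp
    · rw [h1r, div_pow]
      field_simp
      ring
  · intro n hn
    rw [Nat.descFactorial_of_lt (Finset.mem_range.mp hn)]
    simp

/-- The expected number of draws to collect at least two copies of each of `d` kinds:
`⟨T⟩₂ = d² Σ_{m=0}^{d-1} Σ_{j=0}^{m} (-1)^m C(d-1,m) C(m,j) (j+2)!/(m+1)^{j+3}`. -/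
theorem expected_time_two_copies_sum (d : ℕ) (hd : 1 ≤ d) :
    ∑' n : ℕ, (n : ℝ) * stopProb d n
      = (d : ℝ) ^ 2 * ∑ m ∈ Finset.range d, ∑ j ∈ Finset.range (m + 1),
          (-1 : ℝ) ^ m * (Nat.choose (d - 1) m : ℝ) * (Nat.choose m j : ℝ) *
            (Nat.factorial (j + 2) : ℝ) / ((m : ℝ) + 1) ^ (j + 3) := by
  obtain ⟨d, rfl⟩ := Nat.exists_eq_add_of_le' hd
  refine HasSum.tsum_eq ?_
  rw [← hasSum_nat_add_iff' 1]
  simp only [Finset.sum_range_one, Nat.cast_zero, zero_mul, sub_zero, Nat.add_sub_cancel]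
  have hterms := hasSum_sum fun m (hm : m ∈ Finset.range (d + 1)) =>
    hasSum_sum fun j (_ : j ∈ Finset.range (m + 1)) =>
      (hasSum_succ_mul_descFactorial_mul_pow_div d m j
        (Nat.lt_succ_iff.mp (Finset.mem_range.mp hm))).mul_left
        ((-1 : ℝ) ^ m * (d.choose m : ℝ) * (m.choose j : ℝ))
  convert! hterms using 1
  · ext n
    rw [stopProb_succ, X_mul_exp_sub_pow]
    simp only [map_sum, PowerSeries.coeff_C_mul, Finset.mul_sum, Finset.sum_div,
      ← factorial_mul_coeff_exp_pow_mul_X_pow]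
    refine Finset.sum_congr rfl fun m _ => Finset.sum_congr rfl fun j _ => ?_
    push_cast
    ring
  · simp only [Finset.mul_sum]
    refine Finset.sum_congr rfl fun m _ => Finset.sum_congr rfl fun j _ => ?_
    push_cast
    ring
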